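/- Fix constants c₂ ≥ c₁ > 0 and ε > 0. There is a constant C (depending only on c₁, c₂, ε) such that: if N, M, K, L are real numbers with 1 ≤ N ≤ M ≤ K, c₁L ≤ K ≤ c₂L, and 0 < Δ ≤ c₂ L^{1/2}, then the number 𝒜₂(N,M,K,L;Δ) of quadruples (n,m,k,ℓ) of positive integers with N < n ≤ 2N, M < m ≤ 2M, K < k ≤ 2K, L < ℓ ≤ 2L and 0 < |√n + √m + √k − √ℓ| < Δ satisfies 𝒜₂(N,M,K,L;Δ) ≤ C(Δ L^{1/2} NMK + NM L^{1/2+ε}). In particular, if in addition Δ L^{1/2} ≥ 1, then 𝒜₂(N,M,K,L;Δ) ≤ C · Δ L^{1/2} NMK. -/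

import Mathlib

open Real MeasureTheory Finset
open scoped Classical

noncomputable section

/-- The set of quadruples counted by `𝒜₂(N,M,K,L;Δ)`. -/
def A2set (N M K L Δ : ℝ) : Set (ℕ × ℕ × ℕ × ℕ) :=
  {q | N < (q.1 : ℝ) ∧ (q.1 : ℝ) ≤ 2 * N ∧ M < (q.2.1 : ℝ) ∧ (q.2.1 : ℝ) ≤ 2 * M ∧
       K < (q.2.2.1 : ℝ) ∧ (q.2.2.1 : ℝ) ≤ 2 * K ∧ L < (q.2.2.2 : ℝ) ∧ (q.2.2.2 : ℝ) ≤ 2 * L ∧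
       0 < |Real.sqrt q.1 + Real.sqrt q.2.1 + Real.sqrt q.2.2.1 - Real.sqrt q.2.2.2| ∧
       |Real.sqrt q.1 + Real.sqrt q.2.1 + Real.sqrt q.2.2.1 - Real.sqrt q.2.2.2| < Δ}

/-!
Fix `n` and `m` and put `α = √n + √m`. A pair `(k, l)` with `|α + √k - √l| < Δ` and `√l ≤ R`
makes the triangle with sides `α`, `√k`, `√l` nearly degenerate, so by Heron's formula
`(j - α²)² / (2α)²`, `j = l - k`, lies within `O(Δ R² / α)` of the integer `k`. There are `O(α R)`
possible `j`, and those for which this quadratic phase is close to an integer are counted through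
exponential sums: Weyl differencing reduces the sums over `j` to linear ones, and the divisor bound
controls how often the resulting frequencies repeat. This gives `O(Δ R³ + R^(1 + 2ε))` pairs when
`Δ R < 1`; for larger `Δ` it suffices to count the `l` belonging to a given `k`.
-/

section ExponentialSums

open scoped FourierTransform InnerProductSpace

lemma four_mul_norm_coe_le_norm_fourierChar_sub_one (x : ℝ) :
    4 * ‖(x : UnitAddCircle)‖ ≤ ‖(𝐞 x : ℂ) - 1‖ := by
  set y := x - round x with hy
  have hper : (𝐞 x : ℂ) = 𝐞 y := by
    rw [hy, fourierChar_apply', fourierChar_apply', mul_sub, mul_comm (2 * π) (round x : ℝ),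
      Circle.exp_sub, Circle.exp_int_mul_two_pi, div_one]
  have hjordan : 2 * |y| ≤ |sin (π * y)| := by
    have h : |π * y| ≤ π / 2 := by
      rw [abs_mul, abs_of_pos pi_pos]
      nlinarith [pi_pos, abs_sub_round x]
    calc 2 * |y| = 2 / π * |π * y| := by rw [abs_mul, abs_of_pos pi_pos]; field_simp
      _ ≤ |sin (π * y)| := mul_abs_le_abs_sin h
  rw [UnitAddCircle.norm_eq, hper, fourierChar_apply, mul_comm _ Complex.I,
    Complex.norm_exp_I_mul_ofReal_sub_one, norm_mul, Real.norm_ofNat, Real.norm_eq_abs,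
    show 2 * π * y / 2 = π * y by ring]
  linarith

lemma half_le_re_fourierChar {x : ℝ} (hx : ‖(x : UnitAddCircle)‖ ≤ 1 / 8) :
    1 / 2 ≤ (𝐞 x : ℂ).re := by
  rw [UnitAddCircle.norm_eq] at hx
  have hcos : (𝐞 x : ℂ).re = cos (2 * π * (x - round x)) := by
    rw [fourierChar_apply, Complex.exp_ofReal_mul_I_re, mul_sub, mul_comm (2 * π) (round x : ℝ),
      cos_sub_int_mul_two_pi]
  have habs : |2 * π * (x - round x)| ≤ 1 := by
    rw [abs_mul, abs_of_pos two_pi_pos]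
    nlinarith [pi_lt_four, pi_pos]
  rw [hcos]
  linarith [one_sub_sq_div_two_le_cos (x := 2 * π * (x - round x)),
    (sq_le_one_iff_abs_le_one _).mpr habs]

lemma norm_sum_range_fourierChar_mul_norm_le_one (x : ℝ) (n : ℕ) :
    ‖∑ i ∈ range n, (𝐞 (i * x) : ℂ)‖ * ‖(x : UnitAddCircle)‖ ≤ 1 := by
  have hgeom : (∑ i ∈ range n, (𝐞 (i * x) : ℂ)) * ((𝐞 x : ℂ) - 1) = (𝐞 x : ℂ) ^ n - 1 := by
    simp_rw [← nsmul_eq_mul, AddChar.map_nsmul_eq_pow, Circle.coe_pow]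
    exact geom_sum_mul _ _
  have htwo : ‖∑ i ∈ range n, (𝐞 (i * x) : ℂ)‖ * ‖(𝐞 x : ℂ) - 1‖ ≤ 2 := by
    rw [← norm_mul, hgeom]
    refine (norm_sub_le _ _).trans_eq ?_
    rw [norm_pow, Circle.norm_coe, norm_one]
    norm_num
  nlinarith [four_mul_norm_coe_le_norm_fourierChar_sub_one x,
    norm_nonneg (∑ i ∈ range n, (𝐞 (i * x) : ℂ)), norm_nonneg (x : UnitAddCircle)]

lemma norm_sum_fourierChar_le_card {ι : Type*} (s : Finset ι) (φ : ι → ℝ) :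
    ‖∑ i ∈ s, (𝐞 (φ i) : ℂ)‖ ≤ #s := by
  simpa only [Circle.norm_coe, sum_const, nsmul_eq_mul, mul_one] using
    norm_sum_le s fun i ↦ (𝐞 (φ i) : ℂ)

lemma inner_fourierChar (x y : ℝ) : ⟪(𝐞 x : ℂ), (𝐞 y : ℂ)⟫_ℂ = 𝐞 (y - x) := by
  rw [RCLike.inner_apply, ← Circle.coe_inv_eq_conj, ← Circle.coe_mul, ← div_eq_mul_inv,
    AddChar.map_sub_eq_div]

/-- The quantity `min (X, 1 / ‖x‖)` of analytic number theory, `‖x‖` being the distance from `x` to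
the nearest integer; the maximum in the denominator makes it equal to `X` when `x` is an integer. -/
def minInvDist (X x : ℝ) : ℝ := X / max 1 (X * ‖(x : UnitAddCircle)‖)

lemma minInvDist_nonneg {X : ℝ} (hX : 0 ≤ X) (x : ℝ) : 0 ≤ minInvDist X x :=
  div_nonneg hX (zero_le_one.trans (le_max_left _ _))

lemma minInvDist_le {X : ℝ} (hX : 0 ≤ X) (x : ℝ) : minInvDist X x ≤ X :=
  div_le_self hX (le_max_left _ _)

lemma minInvDist_mul_norm_le_one (X x : ℝ) :
    minInvDist X x * ‖(x : UnitAddCircle)‖ ≤ 1 := by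
  unfold minInvDist
  rw [div_mul_eq_mul_div, div_le_one (by positivity)]
  exact le_max_right _ _

lemma le_minInvDist {X t x : ℝ} (hX : 0 ≤ X) (ht : t ≤ X) (htx : t * ‖(x : UnitAddCircle)‖ ≤ 1) :
    t ≤ minInvDist X x := by
  unfold minInvDist
  rw [le_div_iff₀ (by positivity)]
  rcases le_total 1 (X * ‖(x : UnitAddCircle)‖) with h | h
  · rw [max_eq_right h]
    nlinarith
  · rwa [max_eq_left h, mul_one]

lemma norm_sum_range_fourierChar_le_minInvDist {X : ℝ} {n : ℕ} (hn : n ≤ X) (x : ℝ) :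
    ‖∑ i ∈ range n, (𝐞 (i * x) : ℂ)‖ ≤ minInvDist X x := by
  refine le_minInvDist (n.cast_nonneg.trans hn) ?_ (norm_sum_range_fourierChar_mul_norm_le_one x n)
  simpa using (norm_sum_fourierChar_le_card (range n) (fun i ↦ i * x)).trans (by simpa using hn)

lemma norm_sum_range_sq_le {E : Type*} [NormedAddCommGroup E] [InnerProductSpace ℂ E]
    (v : ℕ → E) (n : ℕ) :
    ‖∑ i ∈ range n, v i‖ ^ 2 ≤
      ∑ i ∈ range n, ‖v i‖ ^ 2 + 2 * ∑ d ∈ Ico 1 n, ‖∑ j ∈ range (n - d), ⟪v j, v (j + d)⟫_ℂ‖ := by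
  have hexpand : ‖∑ i ∈ range n, v i‖ ^ 2 =
      ∑ i ∈ range n, ‖v i‖ ^ 2 + 2 * (∑ i ∈ range n, ∑ j ∈ range i, ⟪v j, v i⟫_ℂ).re := by
    induction n with
    | zero => simp
    | succ n ih =>
      simp only [sum_range_succ, Complex.add_re, mul_add]
      rw [norm_add_sq (𝕜 := ℂ), ih, sum_inner, RCLike.re_eq_complex_re]
      ring
  have hshift : ∑ i ∈ range n, ∑ j ∈ range i, ⟪v j, v i⟫_ℂ =
      ∑ d ∈ Ico 1 n, ∑ j ∈ range (n - d), ⟪v j, v (j + d)⟫_ℂ := by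
    rw [sum_sigma', sum_sigma']
    refine sum_bij' (fun p _ ↦ ⟨p.1 - p.2, p.2⟩) (fun p _ ↦ ⟨p.2 + p.1, p.2⟩) ?_ ?_ ?_ ?_ ?_ <;>
      rintro ⟨a, b⟩ h <;> simp only [mem_sigma, mem_range, mem_Ico] at h ⊢
    · omega
    · omega
    · rw [Nat.add_sub_cancel' h.2.le]
    · rw [Nat.add_sub_cancel_left]
    · rw [Nat.add_sub_cancel' h.2.le]
  rw [hexpand, hshift]
  gcongr
  exact (Complex.re_le_norm _).trans (norm_sum_le _ _)

lemma norm_sum_fourierChar_quadratic_sq_le (a b c : ℝ) (n : ℕ) :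
    ‖∑ i ∈ range n, (𝐞 (a * i ^ 2 + b * i + c) : ℂ)‖ ^ 2 ≤
      n + 2 * ∑ d ∈ Ico 1 n, minInvDist n (2 * a * d) := by
  refine (norm_sum_range_sq_le _ n).trans ?_
  gcongr with d
  · simp only [Circle.norm_coe, one_pow, sum_const, card_range, nsmul_eq_mul, mul_one, le_refl]
  · have hfactor : ∀ j : ℕ, ⟪(𝐞 (a * j ^ 2 + b * j + c) : ℂ),
        (𝐞 (a * (j + d : ℕ) ^ 2 + b * (j + d : ℕ) + c) : ℂ)⟫_ℂ =
        𝐞 (a * d ^ 2 + b * d) * 𝐞 (j * (2 * a * d)) := by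
      intro j
      rw [inner_fourierChar, ← Circle.coe_mul, ← AddChar.map_add_eq_mul]
      push_cast
      ring_nf
    simp_rw [hfactor]
    rw [← mul_sum, norm_mul, Circle.norm_coe, one_mul]
    exact norm_sum_range_fourierChar_le_minInvDist (by exact_mod_cast n.sub_le d) _

lemma sum_norm_sum_range_fourierChar_sq_le {ι : Type*} (s : Finset ι) (φ : ι → ℝ) (H : ℕ) :
    ∑ i ∈ s, ‖∑ h ∈ range H, (𝐞 (h * φ i) : ℂ)‖ ^ 2 ≤
      H * (#s + 2 * ∑ d ∈ Ico 1 H, ‖∑ i ∈ s, (𝐞 (d * φ i) : ℂ)‖) := by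
  let v : ℕ → EuclideanSpace ℂ s := fun h ↦ WithLp.toLp 2 fun i ↦ 𝐞 (h * φ i)
  have hsum : ∑ i ∈ s, ‖∑ h ∈ range H, (𝐞 (h * φ i) : ℂ)‖ ^ 2 = ‖∑ h ∈ range H, v h‖ ^ 2 := by
    rw [EuclideanSpace.norm_sq_eq, ← sum_coe_sort]
    simp only [v, WithLp.ofLp_sum, Finset.sum_apply]
  have hnorm (h : ℕ) : ‖v h‖ ^ 2 = #s := by
    simp only [v, EuclideanSpace.norm_sq_eq, Circle.norm_coe, one_pow, sum_const, card_univ,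
      Fintype.card_coe, nsmul_eq_mul, mul_one]
  have hinner (j d : ℕ) : ⟪v j, v (j + d)⟫_ℂ = ∑ i ∈ s, (𝐞 (d * φ i) : ℂ) := by
    rw [PiLp.inner_apply, ← sum_coe_sort s fun i ↦ (𝐞 (d * φ i) : ℂ)]
    refine sum_congr rfl fun i _ ↦ ?_
    rw [inner_fourierChar]
    push_cast
    ring_nf
  rw [hsum]
  refine (norm_sum_range_sq_le v H).trans ?_
  simp only [hnorm, hinner, sum_const, card_range, nsmul_eq_mul]
  rw [mul_add, mul_left_comm, mul_sum (Ico 1 H) _ (H : ℝ)]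
  gcongr with d
  rw [norm_mul, Complex.norm_natCast]
  gcongr
  exact Nat.sub_le _ _

lemma half_le_norm_sum_range_fourierChar {x : ℝ} {H : ℕ}
    (hx : ‖(x : UnitAddCircle)‖ ≤ 1 / (8 * H)) :
    (H : ℝ) / 2 ≤ ‖∑ h ∈ range H, (𝐞 (h * x) : ℂ)‖ := by
  have hhalf : ∀ h ∈ range H, (1 / 2 : ℝ) ≤ (𝐞 (h * x) : ℂ).re := by
    intro h hh
    have hhH : (h : ℝ) < H := by exact_mod_cast mem_range.mp hh
    have hH : (0 : ℝ) < H := h.cast_nonneg.trans_lt hhH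
    apply half_le_re_fourierChar
    rw [← nsmul_eq_mul, AddCircle.coe_nsmul]
    calc ‖h • (x : UnitAddCircle)‖ ≤ h * ‖(x : UnitAddCircle)‖ := norm_nsmul_le
      _ ≤ H * (1 / (8 * H)) := by gcongr
      _ = 1 / 8 := by field_simp
  calc (H : ℝ) / 2 = #(range H) • (1 / 2 : ℝ) := by
        rw [card_range, nsmul_eq_mul, mul_one_div]
    _ ≤ ∑ h ∈ range H, (𝐞 (h * x) : ℂ).re := card_nsmul_le_sum _ _ _ hhalf
    _ ≤ ‖∑ h ∈ range H, (𝐞 (h * x) : ℂ)‖ := by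
        rw [← Complex.re_sum]
        exact Complex.re_le_norm _

lemma card_filter_norm_le_of_fourierChar {ι : Type*} (s : Finset ι) (φ : ι → ℝ) {H : ℕ}
    (hH : 0 < H) :
    (#{i ∈ s | ‖(φ i : UnitAddCircle)‖ ≤ 1 / (8 * H)} : ℝ) ≤
      4 / H * (#s + 2 * ∑ h ∈ Ico 1 H, ‖∑ i ∈ s, (𝐞 (h * φ i) : ℂ)‖) := by
  refine le_of_mul_le_mul_right ?_ (by positivity : 0 < ((H : ℝ) / 2) ^ 2)
  calc _ ≤ ∑ i ∈ s with ‖(φ i : UnitAddCircle)‖ ≤ 1 / (8 * H),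
        ‖∑ h ∈ range H, (𝐞 (h * φ i) : ℂ)‖ ^ 2 := by
        rw [← nsmul_eq_mul]
        refine card_nsmul_le_sum _ _ _ fun i hi ↦ ?_
        gcongr
        exact half_le_norm_sum_range_fourierChar (mem_filter.mp hi).2
    _ ≤ ∑ i ∈ s, ‖∑ h ∈ range H, (𝐞 (h * φ i) : ℂ)‖ ^ 2 :=
        sum_le_sum_of_subset_of_nonneg (filter_subset _ _) fun _ _ _ ↦ by positivity
    _ ≤ _ := sum_norm_sum_range_fourierChar_sq_le s φ H
    _ = _ := by
        field_simp
        ring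

end ExponentialSums

section SumMinInvDist

lemma card_filter_floor_abs_sub_eq_le_two (S : Finset ℕ) (y : ℝ) (w : ℕ) :
    #{u ∈ S | ⌊|((u : ℕ) : ℝ) - y|⌋₊ = w} ≤ 2 := by
  refine (card_le_card (t := {⌈y + w⌉₊, ⌊y - w⌋₊}) fun u hu ↦ ?_).trans card_le_two
  obtain ⟨hle, hlt⟩ := (Nat.floor_eq_iff (abs_nonneg _)).mp (mem_filter.mp hu).2
  rw [mem_insert, mem_singleton]
  rcases le_total y u with h | h
  · rw [abs_of_nonneg (sub_nonneg.mpr h)] at hle hlt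
    left
    refine le_antisymm ?_ (Nat.ceil_le.mpr (by linarith))
    have : (u : ℝ) < (⌈y + w⌉₊ + 1 : ℕ) := by
      push_cast
      linarith [Nat.le_ceil (y + w)]
    exact Nat.lt_succ_iff.mp (by exact_mod_cast this)
  · rw [abs_of_nonpos (sub_nonpos.mpr h)] at hle hlt
    right
    refine ((Nat.floor_eq_iff ?_).mpr ⟨?_, ?_⟩).symm <;> linarith [u.cast_nonneg (α := ℝ)]

lemma sum_le_of_mul_abs_sub_le {S : Finset ℕ} {F : ℕ → ℝ} {A X y : ℝ} (hA : 1 ≤ A) (hX : 0 ≤ X)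
    (hS : ∀ u ∈ S, |(u : ℝ) - y| ≤ A) (hFX : ∀ u ∈ S, F u ≤ X)
    (hFA : ∀ u ∈ S, F u * |(u : ℝ) - y| ≤ A) :
    ∑ u ∈ S, F u ≤ 2 * (X + A * (1 + log A)) := by
  let G : ℕ → ℝ := fun w ↦ if w = 0 then X else A / w
  have hFG : ∀ u ∈ S, F u ≤ G ⌊|(u : ℝ) - y|⌋₊ := by
    intro u hu
    rcases eq_or_ne ⌊|(u : ℝ) - y|⌋₊ 0 with h | h
    · simpa only [G, if_pos h] using hFX u hu
    · simp only [G, if_neg h]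
      rw [le_div_iff₀ (by positivity)]
      rcases le_total (F u) 0 with hF | hF
      · nlinarith [Nat.cast_nonneg (α := ℝ) ⌊|(u : ℝ) - y|⌋₊]
      · exact (mul_le_mul_of_nonneg_left (Nat.floor_le (abs_nonneg _)) hF).trans (hFA u hu)
  have hmaps : ∀ u ∈ S, ⌊|(u : ℝ) - y|⌋₊ ∈ range (⌊A⌋₊ + 1) := fun u hu ↦
    mem_range_succ_iff.mpr (Nat.floor_le_floor (hS u hu))
  calc ∑ u ∈ S, F u ≤ ∑ u ∈ S, G ⌊|(u : ℝ) - y|⌋₊ := sum_le_sum hFG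
    _ = ∑ w ∈ range (⌊A⌋₊ + 1), #{u ∈ S | ⌊|((u : ℕ) : ℝ) - y|⌋₊ = w} * G w := by
        rw [← sum_fiberwise_of_maps_to' hmaps G]
        simp only [sum_const, nsmul_eq_mul]
    _ ≤ ∑ w ∈ range (⌊A⌋₊ + 1), 2 * G w := by
        gcongr with w
        exact_mod_cast card_filter_floor_abs_sub_eq_le_two S y w
    _ = 2 * (X + A * harmonic ⌊A⌋₊) := by
        rw [← mul_sum, sum_range_succ', add_comm, harmonic]
        push_cast
        simp only [G, if_pos, Nat.succ_ne_zero, if_false, Nat.cast_add_one, div_eq_mul_inv,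
          mul_sum]
    _ ≤ 2 * (X + A * (1 + log A)) := by
        gcongr
        exact harmonic_floor_le_one_add_log A hA

lemma sum_minInvDist_div_le_of_round_eq {A X : ℝ} (hA : 1 ≤ A) (hX : 0 ≤ X) {S : Finset ℕ} {t : ℤ}
    (hS : ∀ u ∈ S, round ((u : ℝ) / A) = t) :
    ∑ u ∈ S, minInvDist X (u / A) ≤ 2 * (X + A * (1 + log A)) := by
  have hA₀ : 0 < A := by linarith
  have hdist : ∀ u ∈ S, |(u : ℝ) - t * A| = A * ‖((u / A : ℝ) : UnitAddCircle)‖ := by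
    intro u hu
    rw [UnitAddCircle.norm_eq, hS u hu, ← abs_of_pos hA₀, ← abs_mul, abs_of_pos hA₀]
    congr 1
    field_simp
  refine sum_le_of_mul_abs_sub_le (y := t * A) hA hX ?_ (fun _ _ ↦ minInvDist_le hX _) ?_ <;>
    intro u hu <;> rw [hdist u hu]
  · rw [UnitAddCircle.norm_eq]
    nlinarith [abs_sub_round ((u : ℝ) / A)]
  · nlinarith [minInvDist_mul_norm_le_one X ((u : ℝ) / A)]

lemma sum_minInvDist_div_le {A X : ℝ} (hA : 1 ≤ A) (hX : 0 ≤ X) (U : ℕ) :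
    ∑ u ∈ Icc 1 U, minInvDist X (u / A) ≤ (U / A + 2) * (2 * (X + A * (1 + log A))) := by
  have hround : Monotone (round : ℝ → ℤ) := fun x y hxy ↦ by
    rw [round_eq, round_eq]
    gcongr
  have hmaps : ∀ u ∈ Icc 1 U, round ((u : ℝ) / A) ∈ Icc (0 : ℤ) (round ((U : ℝ) / A)) := by
    intro u hu
    rw [mem_Icc] at hu ⊢
    refine ⟨round_zero (α := ℝ) ▸ hround (by positivity), hround ?_⟩
    gcongr
    exact hu.2
  have hcard : (#(Icc (0 : ℤ) (round ((U : ℝ) / A))) : ℝ) ≤ U / A + 2 := by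
    have hnonneg : 0 ≤ round ((U : ℝ) / A) := round_zero (α := ℝ) ▸ hround (by positivity)
    rw [Int.card_Icc, sub_zero, ← Int.cast_natCast, Int.toNat_of_nonneg (by omega)]
    push_cast
    linarith [round_le_add_half ((U : ℝ) / A)]
  rw [← sum_fiberwise_of_maps_to hmaps]
  refine (sum_le_card_nsmul _ _ _ fun t _ ↦
    sum_minInvDist_div_le_of_round_eq hA hX fun u hu ↦ (mem_filter.mp hu).2).trans ?_
  rw [nsmul_eq_mul]
  have := log_nonneg hA
  gcongr

end SumMinInvDist

section Divisors

lemma natCast_add_one_le_mul_rpow {ε : ℝ} (hε : 0 < ε) {p : ℝ} (hp : 2 ≤ p) (v : ℕ) :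
    (v : ℝ) + 1 ≤ (1 + 1 / (ε * log 2)) * (p ^ v) ^ ε := by
  have hexp : 1 + ε * log 2 * v ≤ (p ^ v) ^ ε := by
    calc 1 + ε * log 2 * v ≤ exp (log (2 ^ v) * ε) := by
          rw [log_pow]
          linarith [add_one_le_exp (v * log 2 * ε)]
      _ = ((2 : ℝ) ^ v) ^ ε := (rpow_def_of_pos (by positivity) ε).symm
      _ ≤ (p ^ v) ^ ε := by gcongr
  calc (v : ℝ) + 1 ≤ (v : ℝ) + 1 + (1 / (ε * log 2) + ε * log 2 * v) := by
        linarith [show 0 ≤ 1 / (ε * log 2) + ε * log 2 * v by positivity]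
    _ = (1 + 1 / (ε * log 2)) * (1 + ε * log 2 * v) := by
        field_simp
        ring
    _ ≤ (1 + 1 / (ε * log 2)) * (p ^ v) ^ ε := by gcongr

lemma natCast_add_one_le_rpow {ε p : ℝ} (hp₀ : 0 ≤ p) (hp : 2 ≤ p ^ ε) (v : ℕ) :
    (v : ℝ) + 1 ≤ (p ^ v) ^ ε := by
  calc (v : ℝ) + 1 ≤ 2 ^ v := by exact_mod_cast Nat.lt_two_pow_self (n := v)
    _ ≤ (p ^ ε) ^ v := by gcongr
    _ = (p ^ v) ^ ε := (rpow_pow_comm hp₀ ε v)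

lemma exists_card_divisors_le_mul_rpow {ε : ℝ} (hε : 0 < ε) :
    ∃ C : ℝ, 1 ≤ C ∧ ∀ n : ℕ, n ≠ 0 → (#n.divisors : ℝ) ≤ C * (n : ℝ) ^ ε := by
  set C : ℝ := 1 + 1 / (ε * log 2) with hC
  set P : ℕ := ⌈(2 : ℝ) ^ (1 / ε)⌉₊
  have hC₁ : 1 ≤ C := by
    have := log_pos one_lt_two
    rw [hC, le_add_iff_nonneg_right]
    positivity
  refine ⟨C ^ P, one_le_pow₀ hC₁, fun n hn ↦ ?_⟩
  have hfactor : ∀ p ∈ n.primeFactors, (n.factorization p : ℝ) + 1 ≤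
      (if p < P then C else 1) * ((p : ℝ) ^ n.factorization p) ^ ε := by
    intro p hp
    split_ifs with h
    · exact natCast_add_one_le_mul_rpow hε
        (by exact_mod_cast (Nat.prime_of_mem_primeFactors hp).two_le) _
    · rw [one_mul]
      refine natCast_add_one_le_rpow p.cast_nonneg ?_ _
      calc (2 : ℝ) = (2 ^ (1 / ε)) ^ ε := by
            rw [← rpow_mul zero_le_two, one_div_mul_cancel hε.ne', rpow_one]
        _ ≤ (p : ℝ) ^ ε := by
            gcongr
            exact (Nat.le_ceil _).trans (by exact_mod_cast not_lt.mp h)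
  have hsmall : ∏ p ∈ n.primeFactors, (if p < P then C else 1) ≤ C ^ P := by
    rw [prod_ite, prod_const_one, mul_one, prod_const]
    refine pow_le_pow_right₀ hC₁ ((card_le_card fun p hp ↦ ?_).trans_eq (card_range P))
    exact mem_range.mpr (mem_filter.mp hp).2
  have hprod : ∏ p ∈ n.primeFactors, ((p : ℝ) ^ n.factorization p) ^ ε = (n : ℝ) ^ ε := by
    rw [finsetProd_rpow _ _ (fun p _ ↦ by positivity)]
    congr 1
    exact_mod_cast Nat.prod_factorization_pow_eq_self hn
  calc (#n.divisors : ℝ) = ∏ p ∈ n.primeFactors, ((n.factorization p : ℝ) + 1) := by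
        rw [Nat.card_divisors hn]
        push_cast
        rfl
    _ ≤ _ := prod_le_prod (fun p _ ↦ by positivity) hfactor
    _ = _ := prod_mul_distrib
    _ ≤ C ^ P * (n : ℝ) ^ ε := by
        rw [hprod]
        gcongr

lemma sum_mul_le_mul_sum_Icc {f : ℕ → ℝ} (hf : ∀ u, 0 ≤ f u) {S : Finset (ℕ × ℕ)} {U : ℕ} {D : ℝ}
    (hS : ∀ p ∈ S, p.1 * p.2 ∈ Icc 1 U) (hD : ∀ u ∈ Icc 1 U, (#u.divisors : ℝ) ≤ D) :
    ∑ p ∈ S, f (p.1 * p.2) ≤ D * ∑ u ∈ Icc 1 U, f u := by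
  rw [← sum_fiberwise_of_maps_to' hS f, mul_sum]
  gcongr with u hu
  rw [sum_const, nsmul_eq_mul]
  refine mul_le_mul_of_nonneg_right (le_trans ?_ (hD u hu)) (hf u)
  exact_mod_cast (card_le_card fun p hp ↦ Nat.mem_divisorsAntidiagonal.mpr
    ⟨(mem_filter.mp hp).2, by grind⟩).trans_eq
      (by rw [← Nat.map_div_right_divisors, card_map] : #u.divisorsAntidiagonal = #u.divisors)

end Divisors

section QuadraticPhase

open scoped FourierTransform

/-- The quadratic phase `i ↦ i ^ 2 / (2 * B) + b * i + c`; its differences `φ (i + d) - φ i` are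
linear in `i` with slope `d / B`. -/
def quadraticPhase (B b c : ℝ) (i : ℕ) : ℝ := i ^ 2 / (2 * B) + b * i + c

lemma sum_minInvDist_mul_div_le {B : ℝ} {X : ℕ} (hB : 1 ≤ B) (hBX : B ≤ X) {H : ℕ} (hH : 0 < H)
    {D : ℝ} (hD : ∀ u ∈ Icc 1 (H * X), (#u.divisors : ℝ) ≤ D) :
    ∑ h ∈ Ico 1 H, ∑ d ∈ Ico 1 X, minInvDist X ((h * d : ℕ) / B) ≤
      6 * H * X ^ 2 / B * (D * (2 + log X)) := by
  have hX₁ : (1 : ℝ) ≤ X := hB.trans hBX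
  have hH₁ : (1 : ℝ) ≤ H := by exact_mod_cast hH
  have hD₀ : 0 ≤ D := (Nat.cast_nonneg _).trans
    (hD 1 (mem_Icc.mpr ⟨le_rfl, Nat.mul_pos hH (by exact_mod_cast hX₁)⟩))
  have hmem : ∀ p ∈ Ico 1 H ×ˢ Ico 1 X, p.1 * p.2 ∈ Icc 1 (H * X) := by
    rintro ⟨h, d⟩ hp
    simp only [mem_product, mem_Ico, mem_Icc] at hp ⊢
    exact ⟨Nat.mul_pos hp.1.1 hp.2.1, Nat.mul_le_mul hp.1.2.le hp.2.2.le⟩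
  have hone : 1 ≤ H * X / B := (one_le_div (by linarith)).mpr (by nlinarith)
  have hlog : log B ≤ log X := log_le_log (by linarith) hBX
  have hlog₀ : 0 ≤ log B := log_nonneg hB
  rw [← sum_product']
  calc ∑ p ∈ Ico 1 H ×ˢ Ico 1 X, minInvDist X ((p.1 * p.2 : ℕ) / B)
      ≤ D * ∑ u ∈ Icc 1 (H * X), minInvDist X (u / B) :=
        sum_mul_le_mul_sum_Icc (f := fun u ↦ minInvDist X (u / B))
          (fun u ↦ minInvDist_nonneg X.cast_nonneg _) hmem hD
    _ ≤ D * (((H * X : ℕ) / B + 2) * (2 * (X + B * (1 + log B)))) := by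
        gcongr
        exact sum_minInvDist_div_le hB X.cast_nonneg _
    _ ≤ D * ((3 * (H * X / B)) * (2 * (X + X * (1 + log X)))) := by
        gcongr
        push_cast
        linarith
    _ = 6 * H * X ^ 2 / B * (D * (2 + log X)) := by ring

lemma norm_sum_fourierChar_mul_quadraticPhase_sq_le (B b c : ℝ) (h X : ℕ) :
    ‖∑ i ∈ range X, (𝐞 (h * quadraticPhase B b c i) : ℂ)‖ ^ 2 ≤
      X + 2 * ∑ d ∈ Ico 1 X, minInvDist X ((h * d : ℕ) / B) := by
  have hphase (i : ℕ) : h * quadraticPhase B b c i = h / (2 * B) * i ^ 2 + h * b * i + h * c := by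
    unfold quadraticPhase
    ring
  have hslope (d : ℕ) : ((h * d : ℕ) : ℝ) / B = 2 * (h / (2 * B)) * d := by
    push_cast
    ring
  simp_rw [hphase, hslope]
  exact norm_sum_fourierChar_quadratic_sq_le _ _ _ X

lemma sum_norm_sum_fourierChar_quadraticPhase_le {B : ℝ} {X : ℕ} (hB : 1 ≤ B) (hBX : B ≤ X)
    (b c : ℝ) {H : ℕ} (hH : 0 < H) {D : ℝ} (hD₁ : 1 ≤ D)
    (hD : ∀ u ∈ Icc 1 (H * X), (#u.divisors : ℝ) ≤ D) :
    ∑ h ∈ Ico 1 H, ‖∑ i ∈ range X, (𝐞 (h * quadraticPhase B b c i) : ℂ)‖ ≤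
      4 * H * X / √B * (D * (2 + log X)) := by
  set W := ∑ h ∈ Ico 1 H, ‖∑ i ∈ range X, (𝐞 (h * quadraticPhase B b c i) : ℂ)‖
  set E := D * (2 + log X)
  have hX₁ : (1 : ℝ) ≤ X := hB.trans hBX
  have hE : 1 ≤ E := by nlinarith [log_nonneg hX₁]
  have hsq : W ^ 2 ≤ (4 * H * X / √B * E) ^ 2 := by
    have hdiag : (X : ℝ) ≤ X ^ 2 / B * E := by
      calc (X : ℝ) = X * B / B * 1 := by field_simp
        _ ≤ X * X / B * E := by gcongr
        _ = _ := by ring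
    calc W ^ 2 ≤ #(Ico 1 H) * ∑ h ∈ Ico 1 H, _ := sq_sum_le_card_mul_sum_sq
      _ ≤ H * ∑ h ∈ Ico 1 H, (X + 2 * ∑ d ∈ Ico 1 X, minInvDist X ((h * d : ℕ) / B)) := by
          gcongr with h
          · exact_mod_cast (Nat.card_Ico 1 H).trans_le (H.sub_le 1)
          · exact norm_sum_fourierChar_mul_quadraticPhase_sq_le B b c h X
      _ ≤ H * (H * X + 2 * (6 * H * X ^ 2 / B * E)) := by
          rw [sum_add_distrib, ← mul_sum, sum_const, nsmul_eq_mul]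
          gcongr
          · exact_mod_cast (Nat.card_Ico 1 H).trans_le (H.sub_le 1)
          · exact sum_minInvDist_mul_div_le hB hBX hH hD
      _ ≤ H * (H * (X ^ 2 / B * E) + 2 * (6 * H * X ^ 2 / B * E)) := by gcongr
      _ = 13 * (H * X) ^ 2 / B * E := by ring
      _ ≤ 16 * (H * X) ^ 2 / B * (E * E) := by
          gcongr
          · norm_num
          · nlinarith
      _ = (4 * H * X / √B * E) ^ 2 := by
          rw [mul_pow _ E, div_pow, sq_sqrt (by linarith)]
          ring
  exact le_of_sq_le_sq hsq (by positivity)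

lemma card_filter_norm_quadraticPhase_le {B : ℝ} {X : ℕ} (hB : 1 ≤ B) (hBX : B ≤ X) (b c : ℝ)
    {H : ℕ} (hH : 0 < H) {D : ℝ} (hD₁ : 1 ≤ D)
    (hD : ∀ u ∈ Icc 1 (H * X), (#u.divisors : ℝ) ≤ D) :
    (#{i ∈ range X | ‖(quadraticPhase B b c i : UnitAddCircle)‖ ≤ 1 / (8 * H)} : ℝ) ≤
      4 * X / H + 32 * X / √B * (D * (2 + log X)) := by
  refine (card_filter_norm_le_of_fourierChar _ _ hH).trans ?_
  calc _ ≤ 4 / H * (X + 2 * (4 * H * X / √B * (D * (2 + log X)))) := by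
        rw [card_range]
        gcongr
        exact sum_norm_sum_fourierChar_quadraticPhase_le hB hBX b c hH hD₁ hD
    _ = _ := by
        field_simp
        ring

lemma exists_nat_mul_le_one_and_inv_le {θ : ℝ} (hθ₀ : 0 < θ) (hθ₁ : θ ≤ 1) :
    ∃ H : ℕ, 0 < H ∧ H * θ ≤ 1 ∧ (H : ℝ)⁻¹ ≤ 2 * θ := by
  have hH : 0 < ⌊θ⁻¹⌋₊ := Nat.floor_pos.mpr ((one_le_inv₀ hθ₀).mpr hθ₁)
  have hH₁ : (1 : ℝ) ≤ ⌊θ⁻¹⌋₊ := by exact_mod_cast hH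
  refine ⟨⌊θ⁻¹⌋₊, hH, ?_, ?_⟩
  · rw [← le_div_iff₀ hθ₀, one_div]
    exact Nat.floor_le (by positivity)
  · have : 1 < (⌊θ⁻¹⌋₊ + 1) * θ := (inv_lt_iff_one_lt_mul₀ hθ₀).mp (Nat.lt_floor_add_one _)
    rw [inv_le_iff_one_le_mul₀ (by linarith)]
    nlinarith

/-- The choice `H ≈ min (1 / η, √B)` balances the two terms of
`card_filter_norm_quadraticPhase_le`. -/
lemma card_filter_norm_quadraticPhase_le_of_card_divisors_le {B : ℝ} {X : ℕ} (hB : 1 ≤ B)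
    (hBX : B ≤ X) (b c : ℝ) {η : ℝ} (hη : 0 ≤ η) {D : ℝ} (hD₁ : 1 ≤ D)
    (hD : ∀ u ∈ Icc 1 (X * X), (#u.divisors : ℝ) ≤ D) :
    (#{i ∈ range X | ‖(quadraticPhase B b c i : UnitAddCircle)‖ ≤ η} : ℝ) ≤
      64 * (η * X) + 40 * X / √B * (D * (2 + log X)) := by
  have hX : (1 : ℝ) ≤ X := hB.trans hBX
  have hE : 1 ≤ D * (2 + log X) := by nlinarith [log_nonneg hX]
  set θ : ℝ := 8 * η + 1 / √B with hθ
  have hθ₀ : 0 < θ := by positivity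
  suffices h : (#{i ∈ range X | ‖(quadraticPhase B b c i : UnitAddCircle)‖ ≤ η} : ℝ) ≤
      8 * X * θ + 32 * X / √B * (D * (2 + log X)) by
    calc _ ≤ 64 * (η * X) + 8 * X / √B * 1 + 32 * X / √B * (D * (2 + log X)) := by
          linear_combination h + 8 * X * hθ
      _ ≤ 64 * (η * X) + 8 * X / √B * (D * (2 + log X)) + 32 * X / √B * (D * (2 + log X)) := by
          gcongr
      _ = _ := by ring
  rcases lt_or_ge 1 θ with hθ₁ | hθ₁
  · have hcard : (#{i ∈ range X | ‖(quadraticPhase B b c i : UnitAddCircle)‖ ≤ η} : ℝ) ≤ X := by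
      exact_mod_cast (card_filter_le _ _).trans_eq (card_range X)
    have : 0 ≤ 32 * X / √B * (D * (2 + log X)) := by positivity
    nlinarith
  · obtain ⟨H, hH, hHθ, hinv⟩ := exists_nat_mul_le_one_and_inv_le hθ₀ hθ₁
    have hHX : (H : ℝ) ≤ X := by
      refine le_trans ?_ ((sqrt_le_self_iff.mpr (.inr hB)).trans hBX)
      rw [← mul_one (√B), ← div_le_iff₀' (by positivity), ← mul_one_div]
      refine le_trans ?_ hHθ
      gcongr
      linarith
    calc _ ≤ (#{i ∈ range X | ‖(quadraticPhase B b c i : UnitAddCircle)‖ ≤ 1 / (8 * H)} : ℝ) := by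
          have : η ≤ 1 / (8 * H) := by
            rw [le_div_iff₀ (by positivity)]
            nlinarith [show 0 ≤ 1 / √B by positivity]
          gcongr
      _ ≤ 4 * X / H + 32 * X / √B * (D * (2 + log X)) :=
          card_filter_norm_quadraticPhase_le hB hBX b c hH hD₁ fun u hu ↦
            hD u (Icc_subset_Icc_right (Nat.mul_le_mul_right X (by exact_mod_cast hHX)) hu)
      _ ≤ 4 * X * (2 * θ) + 32 * X / √B * (D * (2 + log X)) := by
          rw [div_eq_mul_inv _ (H : ℝ)]
          gcongr
      _ = _ := by ring

lemma two_add_log_le_mul_rpow {δ x : ℝ} (hδ : 0 < δ) (hx : 1 ≤ x) :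
    2 + log x ≤ (2 + 1 / δ) * x ^ δ := by
  have hone : 1 ≤ x ^ δ := one_le_rpow hx hδ.le
  calc 2 + log x ≤ 2 * x ^ δ + x ^ δ / δ := by
        gcongr
        · linarith
        · exact log_le_rpow_div (by linarith) hδ
    _ = _ := by ring

lemma exists_card_filter_norm_quadraticPhase_le {ε : ℝ} (hε : 0 < ε) :
    ∃ C : ℝ, 0 < C ∧ ∀ (X : ℕ) (B b c η : ℝ), 1 ≤ B → B ≤ X → 0 ≤ η →
      (#{i ∈ range X | ‖(quadraticPhase B b c i : UnitAddCircle)‖ ≤ η} : ℝ) ≤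
        C * (η * X + (X : ℝ) ^ (1 + ε) / √B) := by
  obtain ⟨C, hC, hdiv⟩ := exists_card_divisors_le_mul_rpow (ε := ε / 4) (by positivity)
  set C' : ℝ := C * (2 + 1 / (ε / 2)) with hC'
  have hC'₀ : 0 < C' := by positivity
  refine ⟨64 + 40 * C', by positivity, fun X B b c η hB hBX hη ↦ ?_⟩
  have hX : (1 : ℝ) ≤ X := hB.trans hBX
  have hX₀ : (0 : ℝ) < X := by linarith
  set D : ℝ := C * (X : ℝ) ^ (ε / 2) with hD
  have hdivD : ∀ u ∈ Icc 1 (X * X), (#u.divisors : ℝ) ≤ D := by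
    intro u hu
    obtain ⟨hu₁, hu₂⟩ := mem_Icc.mp hu
    calc (#u.divisors : ℝ) ≤ C * (u : ℝ) ^ (ε / 4) := hdiv u (by omega)
      _ ≤ C * ((X : ℝ) * X) ^ (ε / 4) := by
          gcongr
          exact_mod_cast hu₂
      _ = D := by
          rw [mul_rpow X.cast_nonneg X.cast_nonneg, ← rpow_add hX₀, hD]
          ring_nf
  calc _ ≤ 64 * (η * X) + 40 * X / √B * (D * (2 + log X)) :=
        card_filter_norm_quadraticPhase_le_of_card_divisors_le hB hBX b c hη
          (one_le_mul_of_one_le_of_one_le hC (one_le_rpow hX (by positivity))) hdivD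
    _ ≤ 64 * (η * X) + 40 * X / √B * (D * ((2 + 1 / (ε / 2)) * X ^ (ε / 2))) := by
        gcongr
        exact two_add_log_le_mul_rpow (by positivity) hX
    _ = 64 * (η * X) + 40 * C' * (X ^ (1 + ε) / √B) := by
        rw [show 1 + ε = 1 + ε / 2 + ε / 2 by ring, rpow_add hX₀, rpow_add hX₀, rpow_one, hD, hC']
        ring
    _ ≤ (64 + 40 * C') * (η * X) + (64 + 40 * C') * (X ^ (1 + ε) / √B) := by
        gcongr <;> linarith
    _ = _ := by ring

end QuadraticPhase

section Pairs

lemma card_le_add_one_mul_card {ι κ : Type*} {S : Finset ι} {T : Finset κ} {f : ι → κ} {g : ι → ℕ}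
    {d : ℝ} (hd : 0 ≤ d) (hf : ∀ p ∈ S, f p ∈ T) (hfg : Set.InjOn (fun p ↦ (f p, g p)) S)
    (hg : ∀ p ∈ S, ∀ q ∈ S, f p = f q → (g p : ℝ) - g q ≤ d) :
    (#S : ℝ) ≤ (d + 1) * #T := by
  have hfiber : ∀ t ∈ T, #{p ∈ S | f p = t} ≤ ⌊d⌋₊ + 1 := by
    intro t _
    rcases (S.filter fun p ↦ f p = t).eq_empty_or_nonempty with h | h
    · rw [h, card_empty]
      exact Nat.zero_le _
    obtain ⟨q, hq, hmin⟩ := exists_min_image _ g h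
    obtain ⟨hqS, hqt⟩ := mem_filter.mp hq
    calc _ ≤ #(Icc (g q) (g q + ⌊d⌋₊)) := by
          refine card_le_card_of_injOn g (fun p hp ↦ ?_) fun p hp p' hp' h ↦ ?_
          · obtain ⟨hpS, hpt⟩ := mem_filter.mp hp
            rw [coe_Icc, Set.mem_Icc, ← Nat.sub_le_iff_le_add']
            refine ⟨hmin p hp, Nat.le_floor ?_⟩
            rw [Nat.cast_sub (hmin p hp)]
            exact hg p hpS q hqS (hpt.trans hqt.symm)
          · obtain ⟨hpS, hpt⟩ := mem_filter.mp hp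
            obtain ⟨hpS', hpt'⟩ := mem_filter.mp hp'
            exact hfg hpS hpS' (Prod.ext (hpt.trans hpt'.symm) h)
      _ = ⌊d⌋₊ + 1 := by
          rw [Nat.card_Icc]
          omega
  calc (#S : ℝ) ≤ (⌊d⌋₊ + 1 : ℕ) * #T := by
        exact_mod_cast card_le_mul_card_image_of_maps_to hf _ hfiber
    _ ≤ (d + 1) * #T := by
        push_cast
        gcongr
        exact Nat.floor_le hd

lemma card_pairs_le_of_one_le_mul {R Δ α : ℝ} (hR : 0 < R) (hΔR : Δ ≤ R) (h₁ : 1 ≤ Δ * R)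
    (hα : 0 ≤ α) {S : Finset (ℕ × ℕ)}
    (hS : ∀ p ∈ S, 1 ≤ p.1 ∧ √p.2 ≤ R ∧ |α + √p.1 - √p.2| < Δ) :
    (#S : ℝ) ≤ 20 * (Δ * R ^ 3) := by
  have hΔ : 0 < Δ := by
    by_contra! h
    nlinarith
  have hmaps : ∀ p ∈ S, p.1 ∈ Icc 1 ⌊4 * R ^ 2⌋₊ := by
    intro p hp
    obtain ⟨hk, hl, hlt⟩ := hS p hp
    have hsqrt : √p.1 ≤ 2 * R := by linarith [(abs_lt.mp hlt).2]
    refine mem_Icc.mpr ⟨hk, Nat.le_floor ?_⟩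
    rw [← sq_sqrt (p.1.cast_nonneg (α := ℝ))]
    nlinarith [sqrt_nonneg (p.1 : ℝ)]
  have hspread : ∀ p ∈ S, ∀ q ∈ S, p.1 = q.1 → (p.2 : ℝ) - q.2 ≤ 4 * (Δ * R) := by
    intro p hp q hq hpq
    obtain ⟨-, hpl, hp⟩ := hS p hp
    obtain ⟨-, hql, hq⟩ := hS q hq
    rw [hpq, abs_lt] at hp
    rw [abs_lt] at hq
    calc (p.2 : ℝ) - q.2 = (√p.2 - √q.2) * (√p.2 + √q.2) := by
          linear_combination -sq_sqrt (p.2.cast_nonneg (α := ℝ)) +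
            sq_sqrt (q.2.cast_nonneg (α := ℝ))
      _ ≤ (2 * Δ) * (R + R) := by
          gcongr
          linarith
      _ = 4 * (Δ * R) := by ring
  calc (#S : ℝ) ≤ (4 * (Δ * R) + 1) * #(Icc 1 ⌊4 * R ^ 2⌋₊) :=
        card_le_add_one_mul_card (by positivity) hmaps Function.injective_id.injOn hspread
    _ ≤ (4 * (Δ * R) + Δ * R) * (4 * R ^ 2) := by
        rw [Nat.card_Icc, Nat.add_sub_cancel]
        gcongr
        exact Nat.floor_le (by positivity)
    _ = 20 * (Δ * R ^ 3) := by ring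

/-- The numerator of the left-hand side is `16` times the squared area of the triangle with sides
`a`, `x`, `y`, which is nearly degenerate; the factorisation is Heron's formula. -/
lemma abs_sq_sub_sq_div_le {a x y Δ R : ℝ} (hΔ : 0 < Δ) (hΔa : Δ ≤ a) (hΔx : Δ ≤ x) (hyR : y ≤ R)
    (h : |a + x - y| < Δ) :
    |x ^ 2 - ((y ^ 2 - x ^ 2) - a ^ 2) ^ 2 / (2 * a) ^ 2| ≤ 9 / 2 * (Δ * R ^ 2) / a := by
  have ha : 0 < a := by linarith
  obtain ⟨hlow, hupp⟩ := abs_lt.mp h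
  have hR : 0 ≤ R := by linarith
  have hheron : x ^ 2 - ((y ^ 2 - x ^ 2) - a ^ 2) ^ 2 / (2 * a) ^ 2 =
      (a + x - y) * (a + x + y) * (x + y - a) * (a + y - x) / (2 * a) ^ 2 := by
    field_simp
    ring
  rw [hheron, abs_div, abs_mul, abs_mul, abs_mul, abs_of_pos (by positivity : 0 < (2 * a) ^ 2)]
  have hadd : |a + x + y| ≤ 3 * R := abs_le.mpr ⟨by linarith, by linarith⟩
  have hsub : |x + y - a| ≤ 2 * R := abs_le.mpr ⟨by linarith, by linarith⟩
  have hsub' : |a + y - x| ≤ 3 * a := abs_le.mpr ⟨by linarith, by linarith⟩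
  calc _ ≤ Δ * (3 * R) * (2 * R) * (3 * a) / (2 * a) ^ 2 := by gcongr
    _ = 9 / 2 * (Δ * R ^ 2) / a := by
        field_simp
        ring

lemma le_of_abs_add_sqrt_sub_sqrt_lt {Δ α : ℝ} (hΔα : Δ ≤ α) {k l : ℕ} (h : |α + √k - √l| < Δ) :
    k ≤ l := by
  have hsqrt : √(k : ℝ) ≤ √l := by linarith [(abs_lt.mp h).2]
  exact_mod_cast (sqrt_le_sqrt_iff l.cast_nonneg).mp hsqrt

lemma natCast_sub_le_of_abs_add_sqrt_sub_sqrt_lt {R Δ α : ℝ} (hα : 0 ≤ α) (hΔα : Δ ≤ α) {k l : ℕ}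
    (hl : √l ≤ R) (h : |α + √k - √l| < Δ) : ((l - k : ℕ) : ℝ) ≤ 4 * (α * R) := by
  obtain ⟨hlow, hupp⟩ := abs_lt.mp h
  rw [Nat.cast_sub (le_of_abs_add_sqrt_sub_sqrt_lt hΔα h)]
  calc (l : ℝ) - k = (√l - √k) * (√l + √k) := by
        linear_combination -sq_sqrt (l.cast_nonneg (α := ℝ)) + sq_sqrt (k.cast_nonneg (α := ℝ))
    _ ≤ (2 * α) * (R + R) := by
        gcongr <;> linarith
    _ = 4 * (α * R) := by ring

lemma abs_sub_quadraticPhase_le {R Δ α : ℝ} (hΔ₀ : 0 < Δ) (hΔ₁ : Δ ≤ 1) (hα : 1 ≤ α) {k l : ℕ}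
    (hk : 1 ≤ k) (hl : √l ≤ R) (h : |α + √k - √l| < Δ) :
    |(k : ℝ) - quadraticPhase (2 * α ^ 2) (-1 / 2) (α ^ 2 / 4) (l - k)| ≤
      9 / 2 * (Δ * R ^ 2) / α := by
  have hk₁ : 1 ≤ √k := one_le_sqrt.mpr (by exact_mod_cast hk)
  have hheron := abs_sq_sub_sq_div_le hΔ₀ (by linarith) (by linarith) hl h
  rw [sq_sqrt k.cast_nonneg, sq_sqrt l.cast_nonneg] at hheron
  refine le_trans (le_of_eq ?_) hheron
  rw [quadraticPhase, Nat.cast_sub (le_of_abs_add_sqrt_sub_sqrt_lt (by linarith) h)]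
  congr 1
  field_simp
  ring

/-- By `abs_sub_quadraticPhase_le` the phase at `l - k` is close to an integer for each counted
pair `(k, l)`, and it nearly determines `k`. -/
lemma card_pairs_le_card_filter_quadraticPhase {R Δ α : ℝ} (hΔ₀ : 0 < Δ) (hΔ₁ : Δ ≤ 1) (hα : 1 ≤ α)
    {S : Finset (ℕ × ℕ)} (hS : ∀ p ∈ S, 1 ≤ p.1 ∧ √p.2 ≤ R ∧ |α + √p.1 - √p.2| < Δ) {η : ℝ}
    (hη : 9 / 2 * (Δ * R ^ 2) / α ≤ η) :
    (#S : ℝ) ≤ (2 * η + 1) * #{i ∈ range (⌊4 * (α * R)⌋₊ + 1) |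
      ‖(quadraticPhase (2 * α ^ 2) (-1 / 2) (α ^ 2 / 4) i : UnitAddCircle)‖ ≤ η} := by
  have hη₀ : 0 ≤ η := le_trans (by positivity) hη
  have hΔα : Δ ≤ α := hΔ₁.trans hα
  have hphase : ∀ p ∈ S,
      |(p.1 : ℝ) - quadraticPhase (2 * α ^ 2) (-1 / 2) (α ^ 2 / 4) (p.2 - p.1)| ≤ η :=
    fun p hp ↦ (abs_sub_quadraticPhase_le hΔ₀ hΔ₁ hα (hS p hp).1 (hS p hp).2.1
      (hS p hp).2.2).trans hη
  refine card_le_add_one_mul_card (f := fun p ↦ p.2 - p.1) (g := Prod.fst) (by positivity)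
    (fun p hp ↦ ?_) (fun p hp q hq h ↦ ?_) fun p hp q hq h ↦ ?_
  · obtain ⟨-, hl, hlt⟩ := hS p hp
    refine mem_filter.mpr ⟨mem_range_succ_iff.mpr (Nat.le_floor ?_), ?_⟩
    · exact natCast_sub_le_of_abs_add_sqrt_sub_sqrt_lt (by linarith) hΔα hl hlt
    · rw [UnitAddCircle.norm_eq]
      refine (round_le _ (p.1 : ℤ)).trans ?_
      rw [abs_sub_comm]
      exact_mod_cast hphase p hp
  · simp only [Prod.mk.injEq] at h
    have hp' := le_of_abs_add_sqrt_sub_sqrt_lt hΔα (hS p hp).2.2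
    have hq' := le_of_abs_add_sqrt_sub_sqrt_lt hΔα (hS q hq).2.2
    exact Prod.ext h.2 (by omega)
  · have hp' := abs_le.mp (hphase p hp)
    have hq' := abs_le.mp (hphase q hq)
    rw [h] at hp'
    linarith [hp'.2, hq'.1]

lemma rpow_one_add_div_le {R α X : ℝ} (hα : 1 ≤ α) (hαR : α ≤ R) (hX₀ : 0 ≤ X)
    (hX : X ≤ 5 * (α * R)) {ε : ℝ} (hε : 0 < ε) :
    X ^ (1 + ε) / √(2 * α ^ 2) ≤ 5 ^ (1 + ε) * R ^ (1 + 2 * ε) := by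
  have hR : 0 < R := by linarith
  calc X ^ (1 + ε) / √(2 * α ^ 2) ≤ (5 * (α * R)) ^ (1 + ε) / α := by
        gcongr
        exact le_sqrt_of_sq_le (by nlinarith)
    _ = 5 ^ (1 + ε) * (α ^ ε * R ^ (1 + ε)) := by
        rw [mul_rpow (by norm_num) (by positivity), mul_rpow (by positivity) hR.le,
          rpow_add (by positivity : 0 < α), rpow_one]
        field_simp
    _ ≤ 5 ^ (1 + ε) * (R ^ ε * R ^ (1 + ε)) := by gcongr
    _ = 5 ^ (1 + ε) * R ^ (1 + 2 * ε) := by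
        rw [← rpow_add hR]
        ring_nf

lemma natCast_floor_four_mul_add_one_le {x : ℝ} (hx : 1 ≤ x) :
    ((⌊4 * x⌋₊ + 1 : ℕ) : ℝ) ≤ 5 * x := by
  rw [Nat.cast_add_one]
  linarith [Nat.floor_le (by positivity : 0 ≤ 4 * x)]

lemma exists_card_filter_norm_quadraticPhase_floor_le {ε : ℝ} (hε : 0 < ε) :
    ∃ C : ℝ, 0 < C ∧ ∀ R α b c η : ℝ, 1 ≤ α → α ≤ R → 0 ≤ η →
      (#{i ∈ range (⌊4 * (α * R)⌋₊ + 1) |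
          ‖(quadraticPhase (2 * α ^ 2) b c i : UnitAddCircle)‖ ≤ η} : ℝ) ≤
        C * (η * (α * R) + R ^ (1 + 2 * ε)) := by
  obtain ⟨C, hC, hquad⟩ := exists_card_filter_norm_quadraticPhase_le hε
  refine ⟨C * (5 + 5 ^ (1 + ε)), by positivity, fun R α b c η hα hαR hη ↦ ?_⟩
  have hR : 0 < R := by linarith
  set X : ℕ := ⌊4 * (α * R)⌋₊ + 1 with hX
  have hX_le : (X : ℝ) ≤ 5 * (α * R) :=
    natCast_floor_four_mul_add_one_le (one_le_mul_of_one_le_of_one_le hα (hα.trans hαR))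
  have hX_ge : 2 * α ^ 2 ≤ X := by
    rw [hX, Nat.cast_add_one]
    nlinarith [Nat.lt_floor_add_one (4 * (α * R))]
  calc _ ≤ C * (η * X + X ^ (1 + ε) / √(2 * α ^ 2)) :=
        hquad X _ _ _ η (by nlinarith) hX_ge hη
    _ ≤ C * (η * (5 * (α * R)) + 5 ^ (1 + ε) * R ^ (1 + 2 * ε)) := by
        gcongr
        exact rpow_one_add_div_le hα hαR X.cast_nonneg hX_le hε
    _ ≤ C * (5 + 5 ^ (1 + ε)) * (η * (α * R) + R ^ (1 + 2 * ε)) := by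
        have h₁ : 0 ≤ C * (5 ^ (1 + ε) * (η * (α * R))) := by positivity
        have h₂ : 0 ≤ C * (5 * R ^ (1 + 2 * ε)) := by positivity
        linear_combination h₁ + h₂

lemma exists_card_pairs_le_of_mul_lt_one {ε : ℝ} (hε : 0 < ε) :
    ∃ C : ℝ, 0 < C ∧ ∀ R Δ α : ℝ, 1 ≤ R → 0 < Δ → Δ * R < 1 → 1 ≤ α → ∀ S : Finset (ℕ × ℕ),
      (∀ p ∈ S, 1 ≤ p.1 ∧ √p.2 ≤ R ∧ |α + √p.1 - √p.2| < Δ) →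
      (#S : ℝ) ≤ C * (Δ * R ^ 3 + R ^ (1 + 2 * ε)) := by
  obtain ⟨C, hC, hphase⟩ := exists_card_filter_norm_quadraticPhase_floor_le hε
  refine ⟨45 + 5 * C, by positivity, fun R Δ α hR hΔ hΔR hα S hS ↦ ?_⟩
  rcases S.eq_empty_or_nonempty with rfl | ⟨q, hq⟩
  · rw [card_empty, Nat.cast_zero]
    positivity
  have hΔ₁ : Δ ≤ 1 := by nlinarith
  have hαR : α ≤ R := by
    obtain ⟨hk, hl, hlt⟩ := hS q hq
    have hk₁ : 1 ≤ √q.1 := one_le_sqrt.mpr (by exact_mod_cast hk)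
    linarith [(abs_lt.mp hlt).2]
  set η : ℝ := 9 / 2 * (Δ * R ^ 2) / α with hη
  have hηαR : η * (α * R) = 9 / 2 * (Δ * R ^ 3) := by
    rw [hη]
    field_simp
  set T := {i ∈ range (⌊4 * (α * R)⌋₊ + 1) |
    ‖(quadraticPhase (2 * α ^ 2) (-1 / 2) (α ^ 2 / 4) i : UnitAddCircle)‖ ≤ η}
  have hT : (#T : ℝ) ≤ 5 * (α * R) := by
    refine le_trans ?_ (natCast_floor_four_mul_add_one_le (one_le_mul_of_one_le_of_one_le hα hR))
    exact_mod_cast (card_filter_le _ _).trans_eq (card_range _)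
  calc (#S : ℝ) ≤ (2 * η + 1) * #T :=
        card_pairs_le_card_filter_quadraticPhase hΔ hΔ₁ hα hS le_rfl
    _ = 2 * (η * #T) + #T := by ring
    _ ≤ 2 * (η * (5 * (α * R))) + C * (η * (α * R) + R ^ (1 + 2 * ε)) := by
        gcongr
        exact hphase R α _ _ η hα hαR (by positivity)
    _ = 45 * (Δ * R ^ 3) + C * (9 / 2 * (Δ * R ^ 3) + R ^ (1 + 2 * ε)) := by
        linear_combination (10 + C) * hηαR
    _ ≤ (45 + 5 * C) * (Δ * R ^ 3 + R ^ (1 + 2 * ε)) := by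
        have h₁ : 0 ≤ C * (Δ * R ^ 3) := by positivity
        have h₂ : 0 ≤ (45 + 4 * C) * R ^ (1 + 2 * ε) := by positivity
        linarith

lemma exists_card_pairs_le {ε : ℝ} (hε : 0 < ε) :
    ∃ C : ℝ, 0 < C ∧ ∀ R Δ α : ℝ, 1 ≤ R → 0 < Δ → Δ ≤ R → 1 ≤ α → ∀ S : Finset (ℕ × ℕ),
      (∀ p ∈ S, 1 ≤ p.1 ∧ √p.2 ≤ R ∧ |α + √p.1 - √p.2| < Δ) →
      (#S : ℝ) ≤ C * (Δ * R ^ 3 + R ^ (1 + 2 * ε)) := by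
  obtain ⟨C, -, hsmall⟩ := exists_card_pairs_le_of_mul_lt_one hε
  refine ⟨max 20 C, by positivity, fun R Δ α hR hΔ hΔR hα S hS ↦ ?_⟩
  have hR₀ : 0 < R := by linarith
  rcases le_or_gt 1 (Δ * R) with h₁ | h₁
  · calc (#S : ℝ) ≤ 20 * (Δ * R ^ 3) :=
          card_pairs_le_of_one_le_mul hR₀ hΔR h₁ (by linarith) hS
      _ ≤ max 20 C * (Δ * R ^ 3 + R ^ (1 + 2 * ε)) := by
          gcongr
          · exact le_max_left _ _
          · exact le_add_of_nonneg_right (by positivity)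
  · refine (hsmall R Δ α hR hΔ h₁ hα S hS).trans ?_
    gcongr
    exact le_max_right _ _

end Pairs

section Quadruples

/-- The integers `n ∼ X`, that is `X < n ≤ 2 * X`, of the variables counted by `A2set`. -/
def dyadic (X : ℝ) : Finset ℕ := Ioc ⌊X⌋₊ ⌊2 * X⌋₊

lemma mem_dyadic {X : ℝ} (hX : 0 ≤ X) {n : ℕ} : n ∈ dyadic X ↔ X < n ∧ (n : ℝ) ≤ 2 * X := by
  rw [dyadic, mem_Ioc, Nat.floor_lt hX, Nat.le_floor_iff (by positivity)]

lemma one_le_of_mem_dyadic {X : ℝ} {n : ℕ} (hn : n ∈ dyadic X) : 1 ≤ n :=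
  Nat.one_le_of_lt (mem_Ioc.mp hn).1

lemma card_dyadic_le {X : ℝ} (hX : 0 ≤ X) : (#(dyadic X) : ℝ) ≤ 2 * X := by
  rw [dyadic, Nat.card_Ioc]
  exact (Nat.cast_le.mpr (Nat.sub_le _ _)).trans (Nat.floor_le (by positivity))

lemma ncard_A2set_le_sum {N M K L : ℝ} (hN : 0 ≤ N) (hM : 0 ≤ M) (hK : 0 ≤ K) (hL : 0 ≤ L)
    (Δ : ℝ) :
    (A2set N M K L Δ).ncard ≤ ∑ p ∈ dyadic N ×ˢ dyadic M,
      #{q ∈ dyadic K ×ˢ dyadic L | |√p.1 + √p.2 + √q.1 - √q.2| < Δ} := by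
  set S := (dyadic N ×ˢ dyadic M).sigma fun p ↦
    {q ∈ dyadic K ×ˢ dyadic L | |√p.1 + √p.2 + √q.1 - √q.2| < Δ}
  have hsubset : A2set N M K L Δ ⊆ S.image fun x ↦ (x.1.1, x.1.2, x.2.1, x.2.2) := by
    rintro ⟨n, m, k, l⟩ ⟨hn, hn', hm, hm', hk, hk', hl, hl', -, hlt⟩
    refine mem_coe.mpr (mem_image.mpr ⟨⟨(n, m), (k, l)⟩, ?_, rfl⟩)
    simp only [S, mem_sigma, mem_product, mem_filter, mem_dyadic, hN, hM, hK, hL]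
    exact ⟨⟨⟨hn, hn'⟩, hm, hm'⟩, ⟨⟨hk, hk'⟩, hl, hl'⟩, hlt⟩
  calc (A2set N M K L Δ).ncard ≤ #(S.image fun x ↦ (x.1.1, x.1.2, x.2.1, x.2.2)) := by
        rw [← Set.ncard_coe_finset]
        exact Set.ncard_le_ncard hsubset
    _ ≤ #S := card_image_le
    _ = _ := card_sigma _ _

lemma card_filter_dyadic_le_of_sqrt_le {K L Δ : ℝ} (hK : 0 ≤ K) (hL : 0 ≤ L) (hΔ : √L ≤ Δ)
    (P : ℕ × ℕ → Prop) : (#{q ∈ dyadic K ×ˢ dyadic L | P q} : ℝ) ≤ 4 * (Δ * √L * K) := by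
  calc _ ≤ (#(dyadic K ×ˢ dyadic L) : ℝ) := by exact_mod_cast card_filter_le _ _
    _ ≤ (2 * K) * (2 * L) := by
        rw [card_product, Nat.cast_mul]
        gcongr
        exacts [card_dyadic_le hK, card_dyadic_le hL]
    _ = 4 * (√L * √L * K) := by
        rw [mul_self_sqrt hL]
        ring
    _ ≤ 4 * (Δ * √L * K) := by gcongr

lemma sqrt_two_mul_pow_three_le {L : ℝ} (hL : 0 ≤ L) : √(2 * L) ^ 3 ≤ 3 * (√L * L) := by
  have hsqrt_two : √2 ≤ 3 / 2 := (sqrt_le_left (by norm_num)).mpr (by norm_num)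
  calc √(2 * L) ^ 3 = 2 * √2 * (√L * L) := by
        rw [pow_succ, sq_sqrt (by positivity), sqrt_mul zero_le_two]
        ring
    _ ≤ 2 * (3 / 2) * (√L * L) := by gcongr
    _ = 3 * (√L * L) := by ring

lemma sqrt_rpow_one_add_two_mul {x : ℝ} (hx : 0 ≤ x) (s : ℝ) :
    √x ^ (1 + 2 * s) = x ^ (1 / 2 + s) := by
  rw [sqrt_eq_rpow, ← rpow_mul hx]
  ring_nf

lemma exists_card_filter_dyadic_le {c ε : ℝ} (hc : 0 < c) (hε : 0 < ε) :
    ∃ C : ℝ, 0 < C ∧ ∀ K L Δ α : ℝ, 0 < L → c * L ≤ K → 0 < Δ → 1 ≤ α →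
      (#{q ∈ dyadic K ×ˢ dyadic L | |α + √q.1 - √q.2| < Δ} : ℝ) ≤
        C * (Δ * √L * K + L ^ (1 / 2 + ε)) := by
  obtain ⟨C, hC, hpairs⟩ := exists_card_pairs_le hε
  refine ⟨4 + 3 * C / c + C * 2 ^ (1 / 2 + ε), by positivity, fun K L Δ α hL hcL hΔ hα ↦ ?_⟩
  have hK : 0 < K := by nlinarith
  set S := {q ∈ dyadic K ×ˢ dyadic L | |α + √q.1 - √q.2| < Δ}
  suffices h : (#S : ℝ) ≤ 4 * (Δ * √L * K) +
      C * (3 / c * (Δ * √L * K) + 2 ^ (1 / 2 + ε) * L ^ (1 / 2 + ε)) by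
    have h₁ : 0 ≤ C * 2 ^ (1 / 2 + ε) * (Δ * √L * K) := by positivity
    have h₂ : 0 ≤ (4 + 3 * C / c) * L ^ (1 / 2 + ε) := by positivity
    linear_combination h + h₁ + h₂
  rcases S.eq_empty_or_nonempty with hS | ⟨q, hq⟩
  · rw [hS, card_empty, Nat.cast_zero]
    positivity
  rcases le_or_gt Δ √(2 * L) with hΔL | hΔL
  · have hR : 1 ≤ √(2 * L) := by
      have hq₂ := (mem_product.mp (mem_filter.mp hq).1).2
      refine one_le_sqrt.mpr (le_trans ?_ ((mem_dyadic hL.le).mp hq₂).2)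
      exact_mod_cast one_le_of_mem_dyadic hq₂
    have hcube : Δ * √(2 * L) ^ 3 ≤ 3 / c * (Δ * √L * K) := by
      calc Δ * √(2 * L) ^ 3 ≤ Δ * (3 * (√L * L)) := by
            gcongr
            exact sqrt_two_mul_pow_three_le hL.le
        _ = 3 / c * (Δ * √L * (c * L)) := by field_simp
        _ ≤ 3 / c * (Δ * √L * K) := by gcongr
    rw [← mul_rpow zero_le_two hL.le, ← sqrt_rpow_one_add_two_mul (by positivity)]
    refine le_add_of_nonneg_of_le (by positivity) (le_trans ?_
      (mul_le_mul_of_nonneg_left (add_le_add_left hcube _) hC.le))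
    refine hpairs _ Δ α hR hΔ hΔL hα S fun p hp ↦ ?_
    obtain ⟨hp₁₂, hlt⟩ := mem_filter.mp hp
    obtain ⟨hp₁, hp₂⟩ := mem_product.mp hp₁₂
    exact ⟨one_le_of_mem_dyadic hp₁, sqrt_le_sqrt ((mem_dyadic hL.le).mp hp₂).2, hlt⟩
  · have hLΔ : √L ≤ Δ := (sqrt_le_sqrt (by linarith)).trans hΔL.le
    exact le_add_of_le_of_nonneg (card_filter_dyadic_le_of_sqrt_le hK.le hL.le hLΔ _)
      (by positivity)

lemma exists_ncard_A2set_le {c ε : ℝ} (hc : 0 < c) (hε : 0 < ε) :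
    ∃ C : ℝ, 0 < C ∧ ∀ N M K L Δ : ℝ, 0 < N → 0 < M → 0 < L → c * L ≤ K → 0 < Δ →
      ((A2set N M K L Δ).ncard : ℝ) ≤
        C * (Δ * L ^ ((1 : ℝ) / 2) * N * M * K + N * M * L ^ (1 / 2 + ε)) := by
  obtain ⟨C, hC, hpairs⟩ := exists_card_filter_dyadic_le hc hε
  refine ⟨4 * C, by positivity, fun N M K L Δ hN hM hL hcL hΔ ↦ ?_⟩
  have hK : 0 < K := by nlinarith
  have hfiber : ∀ p ∈ dyadic N ×ˢ dyadic M,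
      (#{q ∈ dyadic K ×ˢ dyadic L | |√p.1 + √p.2 + √q.1 - √q.2| < Δ} : ℝ) ≤
        C * (Δ * √L * K + L ^ (1 / 2 + ε)) := by
    intro p hp
    have hn : 1 ≤ √p.1 :=
      one_le_sqrt.mpr (by exact_mod_cast one_le_of_mem_dyadic (mem_product.mp hp).1)
    exact hpairs K L Δ _ hL hcL hΔ (le_add_of_le_of_nonneg hn (sqrt_nonneg _))
  calc ((A2set N M K L Δ).ncard : ℝ) ≤ ∑ p ∈ dyadic N ×ˢ dyadic M,
        (#{q ∈ dyadic K ×ˢ dyadic L | |√p.1 + √p.2 + √q.1 - √q.2| < Δ} : ℝ) := by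
        exact_mod_cast ncard_A2set_le_sum hN.le hM.le hK.le hL.le Δ
    _ ≤ #(dyadic N) * #(dyadic M) * (C * (Δ * √L * K + L ^ (1 / 2 + ε))) := by
        rw [← Nat.cast_mul, ← card_product, ← nsmul_eq_mul]
        exact sum_le_card_nsmul _ _ _ hfiber
    _ ≤ (2 * N) * (2 * M) * (C * (Δ * √L * K + L ^ (1 / 2 + ε))) := by
        gcongr <;> exact card_dyadic_le (by positivity)
    _ = _ := by
        rw [sqrt_eq_rpow]
        ring

end Quadruples

theorem A2_count_bound_general (c₁ ε : ℝ) (hc₁ : 0 < c₁) (hε : 0 < ε) :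
    ∃ C : ℝ, 0 < C ∧ ∀ N M K L Δ : ℝ, 0 < N → 0 < M → 0 < L → c₁ * L ≤ K → 0 < Δ →
      ((A2set N M K L Δ).ncard : ℝ)
          ≤ C * (Δ * L ^ ((1:ℝ)/2) * N * M * K + N * M * L ^ ((1:ℝ)/2 + ε)) ∧
        (1 ≤ Δ * L ^ ((1:ℝ)/2) →
          ((A2set N M K L Δ).ncard : ℝ) ≤ C * (Δ * L ^ ((1:ℝ)/2) * N * M * K)) := by
  obtain ⟨C, hC, hbound⟩ := exists_ncard_A2set_le hc₁ hε
  obtain ⟨C', hC', hbound'⟩ := exists_ncard_A2set_le hc₁ one_half_pos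
  refine ⟨max C (C' * (1 + 1 / c₁)), by positivity, fun N M K L Δ hN hM hL hcL hΔ ↦ ?_⟩
  have hK : 0 < K := by nlinarith
  refine ⟨?_, fun h ↦ ?_⟩
  · refine (hbound N M K L Δ hN hM hL hcL hΔ).trans ?_
    gcongr
    exact le_max_left _ _
  · calc ((A2set N M K L Δ).ncard : ℝ)
        ≤ C' * (Δ * L ^ ((1:ℝ)/2) * N * M * K + 1 * (N * M * L)) := by
          simpa only [add_halves, rpow_one, one_mul] using hbound' N M K L Δ hN hM hL hcL hΔ
      _ ≤ C' * (Δ * L ^ ((1:ℝ)/2) * N * M * K + Δ * L ^ ((1:ℝ)/2) * (N * M * (K / c₁))) := by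
          gcongr
          rwa [le_div_iff₀' hc₁]
      _ = C' * (1 + 1 / c₁) * (Δ * L ^ ((1:ℝ)/2) * N * M * K) := by ring
      _ ≤ _ := by
          gcongr
          exact le_max_right _ _

theorem A2_count_bound (c₁ c₂ ε : ℝ) (hc₁ : 0 < c₁) (hc : c₁ ≤ c₂) (hε : 0 < ε) :
    ∃ C : ℝ, 0 < C ∧ ∀ N M K L Δ : ℝ,
      1 ≤ N → N ≤ M → M ≤ K → c₁ * L ≤ K → K ≤ c₂ * L →
      0 < Δ → Δ ≤ c₂ * L ^ ((1:ℝ)/2) →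
      ((A2set N M K L Δ).ncard : ℝ)
          ≤ C * (Δ * L ^ ((1:ℝ)/2) * N * M * K + N * M * L ^ ((1:ℝ)/2 + ε)) ∧
        (1 ≤ Δ * L ^ ((1:ℝ)/2) →
          ((A2set N M K L Δ).ncard : ℝ) ≤ C * (Δ * L ^ ((1:ℝ)/2) * N * M * K)) := by
  obtain ⟨C, hC, hbound⟩ := A2_count_bound_general c₁ ε hc₁ hε
  exact ⟨C, hC, fun N M K L Δ hN hNM hMK hcL hKL hΔ _ ↦ hbound N M K L Δ (by linarith)
    (by linarith) (pos_of_mul_pos_right (by linarith : 0 < c₂ * L) (by linarith)) hcL hΔ⟩
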